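/- Let T, A, B be states such that A and T are related by a single transition and |A| = |B| + 2. Then there exist distinct points p, q ∈ A \ B such that d(p, q) + c(A, B ∪ {p, q}) ≤ c(T, A) + c(T, B), where c denotes the transition distance. -/

import Mathlib

/-!
Only the sets of toggled points matter. Call two points of `D` *of the same type* (relative to a
state `A`) when both or neither lie in `A`. A pair of the same type is toggled by one transition
of cost `d(p, q)`; a pair of different types is toggled by two transitions through any third point
`x ∈ R`, at cost `d(p, x) + d(x, q)`. So a perfect matching of `D` gives a path from `A` to `A ∆ D`
(`PairMatching.exists_path`). Conversely, when `A` is changed by a transition `{p, q}`, a matching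
of `D` can be repaired, by the triangle inequality, to a matching of `D ∆ {p, q}` relative to the
new state, costing at most `d(p, q)` more (`PairMatching.step`). Hence paths `T → A` and `T → B`
together yield a matching of `A ∆ B` relative to `A` whose cost is at most the sum of their costs.

Since `|A \ B| > |B \ A|`, some pair `{p, q}` of this matching lies inside `A \ B`
(`PairMatching.exists_inner`). Deleting it leaves a matching of
`A ∆ (B ∪ {p, q})`, hence a path from `A` to `B ∪ {p, q}`. There are only finitely many
pairs `{p, q}`, so one of them is optimal for all choices of paths, and one may pass to the infimum.
-/

variable {X : Type*} [MetricSpace X] [DecidableEq X]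

/-- A transition path within ground set `R` from state `A` to state `B`,
recorded by the list of pairs that are added or removed, one per transition. -/
inductive TPath (R : Finset X) : Finset X → Finset X → List (X × X) → Prop
  | nil (A : Finset X) : TPath R A A []
  | add {A B : Finset X} {l : List (X × X)} (p q : X) (hpq : p ≠ q)
      (hp : p ∈ R) (hq : q ∈ R) (hpA : p ∉ A) (hqA : q ∉ A)
      (h : TPath R (insert p (insert q A)) B l) : TPath R A B ((p, q) :: l)
  | remove {A B : Finset X} {l : List (X × X)} (p q : X) (hpq : p ≠ q)
      (hpA : p ∈ A) (hqA : q ∈ A)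
      (h : TPath R (A \ {p, q}) B l) : TPath R A B ((p, q) :: l)

/-- The cost of a transition path: the sum of the distances `d(p, q)` over the
pairs added or removed along the path. -/
noncomputable def pathCost (l : List (X × X)) : ℝ := (l.map fun m => dist m.1 m.2).sum

/-- The transition distance `c(A, B)`: the minimum (infimum) cost of a
transition path from `A` to `B` within ground set `R`. -/
noncomputable def tdist (R A B : Finset X) : ℝ :=
  sInf {c : ℝ | ∃ l : List (X × X), TPath R A B l ∧ pathCost l = c}

/-! ### Matchings and their repair under a transition -/

open scoped symmDiff

/-- `r` is an upper bound for the cost of toggling `p` and `q` in state `A`, by one transition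
if they have the same type and through a third point of `R` otherwise. -/
def PairBound (R A : Finset X) (p q : X) (r : ℝ) : Prop :=
  ((p ∈ A ↔ q ∈ A) ∧ dist p q ≤ r) ∨
    (¬(p ∈ A ↔ q ∈ A) ∧ ∃ x ∈ R, x ≠ p ∧ x ≠ q ∧ dist p x + dist x q ≤ r)

/-- `PairMatching R A D c`: the set `D` has a perfect matching whose pairs can be toggled, starting
from the state `A`, at total cost at most `c`. -/
inductive PairMatching (R A : Finset X) : Finset X → ℝ → Prop
  | nil {c : ℝ} (hc : 0 ≤ c) : PairMatching R A ∅ c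
  | pair {D : Finset X} {r c c' : ℝ} (p q : X) (hp : p ∈ D) (hq : q ∈ D) (hpq : p ≠ q)
      (hw : PairBound R A p q r) (hc : r + c ≤ c')
      (h : PairMatching R A (D \ {p, q}) c) : PairMatching R A D c'

lemma PairBound.symm {R A : Finset X} {p q : X} {r : ℝ} (h : PairBound R A p q r) :
    PairBound R A q p r := by
  rcases h with ⟨h, hd⟩ | ⟨h, x, hx, h1, h2, hd⟩
  · exact Or.inl ⟨h.symm, by rwa [dist_comm]⟩
  · refine Or.inr ⟨fun h' => h h'.symm, x, hx, h2, h1, ?_⟩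
    rw [dist_comm q x, dist_comm x p]; linarith

lemma PairBound.dist_le {R A : Finset X} {p q : X} {r : ℝ} (h : PairBound R A p q r) :
    dist p q ≤ r := by
  rcases h with ⟨_, hd⟩ | ⟨_, x, _, _, _, hd⟩
  · exact hd
  · linarith [dist_triangle p x q]

namespace PairMatching

variable {R A D : Finset X} {c : ℝ}

lemma mono {c' : ℝ} (h : PairMatching R A D c) (hc : c ≤ c') : PairMatching R A D c' := by
  cases h with
  | nil h0 => exact .nil (h0.trans hc)
  | pair p q hp hq hpq hw hc' h => exact .pair p q hp hq hpq hw (hc'.trans hc) h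

lemma congr {A' : Finset X} (h : PairMatching R A D c) (hA : ∀ x ∈ D, (x ∈ A' ↔ x ∈ A)) :
    PairMatching R A' D c := by
  induction h with
  | nil h0 => exact .nil h0
  | pair p q hp hq hpq hw hc h ih =>
    refine .pair p q hp hq hpq ?_ hc (ih fun x hx => hA x (Finset.mem_sdiff.1 hx).1)
    unfold PairBound at *
    rwa [hA p hp, hA q hq]

/-- The partner of a point in the matching. -/
lemma exists_partner (h : PairMatching R A D c) {p : X} (hp : p ∈ D) :
    ∃ p' ∈ D, p' ≠ p ∧ ∃ r c', PairBound R A p p' r ∧ PairMatching R A (D \ {p, p'}) c' ∧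
      r + c' ≤ c := by
  induction h with
  | nil h0 => simp at hp
  | @pair D r c c' a b ha hb hab hw hc h ih =>
    by_cases hpa : p = a
    · subst hpa
      exact ⟨b, hb, hab.symm, r, c, hw, h, hc⟩
    by_cases hpb : p = b
    · subst hpb
      exact ⟨a, ha, hab, r, c, hw.symm, by rwa [Finset.pair_comm], hc⟩
    obtain ⟨p', hp', hne, s, c₁, hw', h', hc'⟩ := ih (by simp [*])
    simp only [Finset.mem_sdiff, Finset.mem_insert, Finset.mem_singleton, not_or] at hp'
    refine ⟨p', hp'.1, hne, s, r + c₁, hw', ?_, by linarith⟩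
    refine .pair a b (by grind) (by grind) hab hw le_rfl ?_
    rwa [sdiff_right_comm]

/-- If exactly `p` of the two toggled points is matched, its partner becomes the partner of `q`;
when this new pair has different types, `p` serves as the third point. -/
lemma step_one (h : PairMatching R A D c) {p q : X} (hpR : p ∈ R)
    (hA : p ∈ A ↔ q ∈ A) (hp : p ∈ D) (hq : q ∉ D) :
    PairMatching R (A ∆ {p, q}) (D ∆ {p, q}) (c + dist p q) := by
  obtain ⟨p', hp', hne, r, c', hw, h', hc⟩ := h.exists_partner hp
  have hqp' : q ≠ p' := by grind
  have hpq : p ≠ q := by grind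
  refine .pair (r := r + dist p q) (c := c') q p' ?_ ?_ hqp' ?_ (by linarith) ?_
  · simp [Finset.mem_symmDiff, hq]
  · simp [Finset.mem_symmDiff, hp', hne, hqp'.symm]
  · rcases hw with ⟨h1, hd⟩ | ⟨h1, x, hx, hxp, hxp', hd⟩
    · refine Or.inr ⟨?_, p, hpR, hpq, hne.symm, by rw [dist_comm q p]; linarith⟩
      simp only [Finset.mem_symmDiff, Finset.mem_insert, Finset.mem_singleton]
      grind
    · refine Or.inl ⟨?_, ?_⟩
      · simp only [Finset.mem_symmDiff, Finset.mem_insert, Finset.mem_singleton]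
        grind
      · linarith [dist_triangle q p p', dist_triangle p x p', dist_comm q p]
  · have : (D ∆ {p, q}) \ {q, p'} = D \ {p, p'} := by
      ext x
      simp only [Finset.mem_symmDiff, Finset.mem_sdiff, Finset.mem_insert, Finset.mem_singleton]
      grind
    rw [this]
    refine h'.congr fun x hx => ?_
    simp only [Finset.mem_symmDiff, Finset.mem_sdiff, Finset.mem_insert,
      Finset.mem_singleton] at hx ⊢
    grind

/-- A transition of the state changes the matched set by the same two points and increases the
cost by at most the cost of the transition. -/
lemma step (h : PairMatching R A D c) {p q : X} (hpR : p ∈ R) (hqR : q ∈ R) (hpq : p ≠ q)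
    (hA : p ∈ A ↔ q ∈ A) : PairMatching R (A ∆ {p, q}) (D ∆ {p, q}) (c + dist p q) := by
  by_cases hp : p ∈ D <;> by_cases hq : q ∈ D
  · obtain ⟨p', hp', hne, r, c', hw, h', hc⟩ := h.exists_partner hp
    have hD : D ∆ {p, q} = D \ {p, q} := by
      ext x
      simp only [Finset.mem_symmDiff, Finset.mem_sdiff, Finset.mem_insert, Finset.mem_singleton]
      grind
    rw [hD]
    by_cases hqp' : p' = q
    · subst hqp'
      have := hw.dist_le
      refine (h'.congr fun x hx => ?_).mono
        (by linarith [dist_nonneg (x := p) (y := p')])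
      simp only [Finset.mem_symmDiff, Finset.mem_sdiff, Finset.mem_insert,
        Finset.mem_singleton] at hx ⊢
      grind
    obtain ⟨q', hq', hne', s, c₂, hw', h₂, hc₂⟩ := h'.exists_partner (p := q) (by grind)
    simp only [Finset.mem_sdiff, Finset.mem_insert, Finset.mem_singleton, not_or] at hq'
    obtain ⟨hq'D, hq'p, hq'p'⟩ := hq'
    refine .pair (r := r + s + dist p q) (c := c₂) p' q' (by grind) (by grind)
      (Ne.symm hq'p') ?_ (by linarith) ?_
    · have hd1 := hw.dist_le
      have hd2 := hw'.dist_le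
      by_cases hT : p' ∈ A ↔ q' ∈ A
      · refine Or.inl ⟨?_, ?_⟩
        · simp only [Finset.mem_symmDiff, Finset.mem_insert, Finset.mem_singleton]
          grind
        · linarith [dist_triangle p' p q', dist_triangle p q q', dist_comm p' p]
      -- If the new pair has different types, the old point `p` is a valid third point.
      · refine Or.inr ⟨?_, p, hpR, hne.symm, Ne.symm hq'p, ?_⟩
        · simp only [Finset.mem_symmDiff, Finset.mem_insert, Finset.mem_singleton]
          grind
        · linarith [dist_triangle p q q', dist_comm p' p]
    · have : (D \ {p, q}) \ {p', q'} = (D \ {p, p'}) \ {q, q'} := by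
        ext x
        simp only [Finset.mem_sdiff, Finset.mem_insert, Finset.mem_singleton]
        tauto
      rw [this]
      refine h₂.congr fun x hx => ?_
      simp only [Finset.mem_symmDiff, Finset.mem_sdiff, Finset.mem_insert,
        Finset.mem_singleton] at hx ⊢
      grind
  · exact h.step_one hpR hA hp hq
  · rw [Finset.pair_comm, dist_comm]
    exact h.step_one hqR hA.symm hq hp
  · refine .pair (r := dist p q) (c := c) p q ?_ ?_ hpq (Or.inl ⟨?_, le_rfl⟩) (by linarith) ?_
    · simp [Finset.mem_symmDiff, hp]
    · simp [Finset.mem_symmDiff, hq]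
    · simp only [Finset.mem_symmDiff, Finset.mem_insert, Finset.mem_singleton]
      grind
    · have : (D ∆ {p, q}) \ {p, q} = D := by
        ext x
        simp only [Finset.mem_symmDiff, Finset.mem_sdiff, Finset.mem_insert, Finset.mem_singleton]
        grind
      rw [this]
      refine h.congr fun x hx => ?_
      simp only [Finset.mem_symmDiff, Finset.mem_insert, Finset.mem_singleton]
      grind

end PairMatching

/-! ### Transport of matchings along transition paths -/

lemma pathCost_cons (m : X × X) (l : List (X × X)) :
    pathCost (m :: l) = dist m.1 m.2 + pathCost l := by
  simp [pathCost]

lemma pathCost_nonneg (l : List (X × X)) : 0 ≤ pathCost l :=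
  List.sum_nonneg (by simp only [List.mem_map]; rintro _ ⟨m, _, rfl⟩; exact dist_nonneg)

lemma insert_insert_eq_symmDiff {A : Finset X} {p q : X} (hp : p ∉ A) (hq : q ∉ A) :
    insert p (insert q A) = A ∆ {p, q} := by
  ext x
  simp only [Finset.mem_symmDiff, Finset.mem_insert, Finset.mem_singleton]
  grind

lemma sdiff_pair_eq_symmDiff {A : Finset X} {p q : X} (hp : p ∈ A) (hq : q ∈ A) :
    A \ {p, q} = A ∆ {p, q} := by
  ext x
  simp only [Finset.mem_symmDiff, Finset.mem_sdiff, Finset.mem_insert, Finset.mem_singleton]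
  grind

/-- Adding and removing a pair are both the toggling of two points of the same type. -/
lemma TPath.toggle {R A B : Finset X} {l : List (X × X)} {p q : X} (hpq : p ≠ q)
    (hp : p ∈ R) (hq : q ∈ R) (hA : p ∈ A ↔ q ∈ A) (h : TPath R (A ∆ {p, q}) B l) :
    TPath R A B ((p, q) :: l) := by
  by_cases hpA : p ∈ A
  · have hqA := hA.1 hpA
    exact .remove p q hpq hpA hqA (by rwa [sdiff_pair_eq_symmDiff hpA hqA])
  · have hqA : q ∉ A := fun h => hpA (hA.2 h)
    exact .add p q hpq hp hq hpA hqA (by rwa [insert_insert_eq_symmDiff hpA hqA])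

/-- Induction principle presenting a transition path as a sequence of togglings. -/
lemma TPath.toggle_induction {R B : Finset X} {P : Finset X → List (X × X) → Prop}
    (h0 : P B [])
    (h1 : ∀ (A : Finset X) (p q : X) (l : List (X × X)), p ≠ q → p ∈ R → q ∈ R →
      (p ∈ A ↔ q ∈ A) → P (A ∆ {p, q}) l → P A ((p, q) :: l))
    {A : Finset X} {l : List (X × X)} (h : TPath R A B l) (hA : A ⊆ R) : P A l := by
  induction h with
  | nil A => exact h0
  | add p q hpq hp hq hpA hqA h ih =>
    refine h1 _ p q _ hpq hp hq (by simp [*]) ?_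
    rw [← insert_insert_eq_symmDiff hpA hqA]
    exact ih h0 (by grind)
  | remove p q hpq hpA hqA h ih =>
    refine h1 _ p q _ hpq (hA hpA) (hA hqA) (by simp [*]) ?_
    rw [← sdiff_pair_eq_symmDiff hpA hqA]
    exact ih h0 (Finset.sdiff_subset.trans hA)

/-- With a fixed target `C`, a matching of `A ∆ C` relative to `A` is carried along a path from `A`
to `B`. -/
lemma TPath.forward {R A B C : Finset X} {l : List (X × X)} (h : TPath R A B l) (hA : A ⊆ R)
    {c : ℝ} (hM : PairMatching R A (A ∆ C) c) : PairMatching R B (B ∆ C) (c + pathCost l) := by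
  refine TPath.toggle_induction (P := fun A l => ∀ c, PairMatching R A (A ∆ C) c →
    PairMatching R B (B ∆ C) (c + pathCost l)) ?_ ?_ h hA c hM
  · intro c hc; simpa [pathCost] using hc
  · intro A p q l hpq hp hq hA ih c hc
    have := hc.step hp hq hpq hA
    rw [symmDiff_right_comm] at this
    have := ih _ this
    rw [pathCost_cons]
    exact this.mono (by simp only; linarith)

/-- The same transport against the direction of the path, since toggling is an involution. -/
lemma TPath.backward {R A B C : Finset X} {l : List (X × X)} (h : TPath R A B l) (hA : A ⊆ R)
    {c : ℝ} (hM : PairMatching R B (B ∆ C) c) : PairMatching R A (A ∆ C) (c + pathCost l) := by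
  refine TPath.toggle_induction (P := fun A l => PairMatching R A (A ∆ C) (c + pathCost l))
    ?_ ?_ h hA
  · simpa [pathCost] using hM
  · intro A p q l hpq hp hq hA ih
    have := ih.step hp hq hpq (by
      simp only [Finset.mem_symmDiff, Finset.mem_insert, Finset.mem_singleton]
      grind)
    rw [symmDiff_right_comm _ C, symmDiff_symmDiff_cancel_right] at this
    rw [pathCost_cons]
    exact this.mono (by linarith)

namespace PairMatching

/-! ### Paths from matchings -/

/-- A matching of `D` relative to `A` is realised by a transition path from `A` to `A ∆ D`. The
state is allowed to vary outside `D`, so that pairs can be toggled one after the other. -/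
lemma exists_path' {R A D : Finset X} {c : ℝ} (h : PairMatching R A D c) (hD : D ⊆ R) :
    ∀ A' : Finset X, (∀ x ∈ D, (x ∈ A' ↔ x ∈ A)) →
      ∃ l, TPath R A' (A' ∆ D) l ∧ pathCost l ≤ c := by
  induction h with
  | nil h0 =>
    intro A' _
    refine ⟨[], ?_, by simpa [pathCost] using h0⟩
    rw [← Finset.bot_eq_empty, symmDiff_bot]
    exact .nil A'
  | @pair D r c c' p q hp hq hpq hw hc h ih =>
    intro A' hA'
    obtain ⟨l, hl, hlc⟩ := ih (Finset.sdiff_subset.trans hD) (A' ∆ {p, q}) (by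
      intro x hx
      simp only [Finset.mem_symmDiff, Finset.mem_sdiff, Finset.mem_insert,
        Finset.mem_singleton] at hx ⊢
      grind)
    have hE : (A' ∆ {p, q}) ∆ (D \ {p, q}) = A' ∆ D := by
      ext x
      simp only [Finset.mem_symmDiff, Finset.mem_sdiff, Finset.mem_insert, Finset.mem_singleton]
      grind
    rw [hE] at hl
    rcases hw with ⟨h1, hd⟩ | ⟨h1, x, hx, hxp, hxq, hd⟩
    · rw [← hA' p hp, ← hA' q hq] at h1
      exact ⟨_, hl.toggle hpq (hD hp) (hD hq) h1, by rw [pathCost_cons]; simp only; linarith⟩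
    · rw [← hA' p hp, ← hA' q hq] at h1
      -- The third point `x` has the type of exactly one of `p` and `q`; that pair goes first.
      by_cases hxA : p ∈ A' ↔ x ∈ A'
      · refine ⟨(p, x) :: (x, q) :: l, ?_, by simp only [pathCost_cons]; linarith⟩
        refine TPath.toggle hxp.symm (hD hp) hx hxA (TPath.toggle hxq hx (hD hq) ?_ ?_)
        · simp only [Finset.mem_symmDiff, Finset.mem_insert, Finset.mem_singleton]
          grind
        · have : (A' ∆ {p, x}) ∆ {x, q} = A' ∆ {p, q} := by
            ext y
            simp only [Finset.mem_symmDiff, Finset.mem_insert, Finset.mem_singleton]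
            grind
          rwa [this]
      · refine ⟨(x, q) :: (p, x) :: l, ?_, by simp only [pathCost_cons]; linarith⟩
        refine TPath.toggle hxq hx (hD hq) (by tauto) (TPath.toggle hxp.symm (hD hp) hx ?_ ?_)
        · simp only [Finset.mem_symmDiff, Finset.mem_insert, Finset.mem_singleton]
          grind
        · have : (A' ∆ {x, q}) ∆ {p, x} = A' ∆ {p, q} := by
            ext y
            simp only [Finset.mem_symmDiff, Finset.mem_insert, Finset.mem_singleton]
            grind
          rwa [this]

lemma exists_path {R A D : Finset X} {c : ℝ} (h : PairMatching R A D c) (hD : D ⊆ R) :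
    ∃ l, TPath R A (A ∆ D) l ∧ pathCost l ≤ c :=
  h.exists_path' hD A fun _ _ => Iff.rfl

/-! ### Existence of inner pairs and of matchings -/

/-- If more than half of the matched points lie in `A`, then some pair lies inside `A`. -/
lemma exists_inner {R A D : Finset X} {c : ℝ} (h : PairMatching R A D c)
    (hcard : (D \ A).card < (D ∩ A).card) :
    ∃ p ∈ D ∩ A, ∃ q ∈ D ∩ A, p ≠ q ∧ ∃ c', PairMatching R A (D \ {p, q}) c' ∧
      dist p q + c' ≤ c := by
  induction h with
  | nil h0 => simp at hcard
  | @pair D r c c' p q hp hq hpq hw hc h ih =>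
    by_cases hin : p ∈ A ∧ q ∈ A
    · exact ⟨p, by grind, q, by grind, hpq, c, h, by linarith [hw.dist_le]⟩
    -- Otherwise the pair has at least as many points outside `A` as inside.
    have hlt : ((D \ {p, q}) \ A).card < ((D \ {p, q}) ∩ A).card := by
      have e1 : (D \ A).card = ((D \ {p, q}) \ A).card + (({p, q} : Finset X) \ A).card := by
        rw [← Finset.card_union_of_disjoint]
        · congr 1; ext x; grind
        · rw [Finset.disjoint_left]; grind
      have e2 : (D ∩ A).card = ((D \ {p, q}) ∩ A).card + (({p, q} : Finset X) ∩ A).card := by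
        rw [← Finset.card_union_of_disjoint]
        · congr 1; ext x; grind
        · rw [Finset.disjoint_left]; grind
      have e3 := Finset.card_sdiff_add_card_inter ({p, q} : Finset X) A
      rw [Finset.card_pair hpq] at e3
      have e4 : 0 < (({p, q} : Finset X) \ A).card := by
        rw [Finset.card_pos]
        by_cases hpA : p ∈ A
        · exact ⟨q, by grind⟩
        · exact ⟨p, by grind⟩
      omega
    obtain ⟨a, ha, b, hb, hab, c₁, h₁, hc₁⟩ := ih hlt
    refine ⟨a, by grind, b, by grind, hab, r + c₁, ?_, by linarith⟩
    refine .pair p q (by grind) (by grind) hpq hw le_rfl ?_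
    rwa [sdiff_right_comm]

/-- A set of even size all of whose points have the same type can be matched. -/
lemma exists_of_even (R A : Finset X) (n : ℕ) : ∀ D : Finset X, D.card = n + n →
    (∀ x ∈ D, ∀ y ∈ D, (x ∈ A ↔ y ∈ A)) → ∃ c, PairMatching R A D c := by
  induction n with
  | zero =>
    intro D hD _
    obtain rfl := Finset.card_eq_zero.1 hD
    exact ⟨0, .nil le_rfl⟩
  | succ n ih =>
    intro D hD hA
    obtain ⟨p, hp, q, hq, hpq⟩ := Finset.one_lt_card.1 (show 1 < D.card by omega)
    obtain ⟨c, hc⟩ := ih (D \ {p, q}) (by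
      rw [Finset.card_sdiff_of_subset (by grind), Finset.card_pair hpq]; omega)
      (fun x hx y hy => hA x (Finset.mem_sdiff.1 hx).1 y (Finset.mem_sdiff.1 hy).1)
    exact ⟨_, .pair p q hp hq hpq (Or.inl ⟨hA p hp q hq, le_rfl⟩) le_rfl hc⟩

end PairMatching

/-! ### Passage to the infimum -/

/-- Any two states are joined by a path through the empty state, so `tdist` is the infimum of a
nonempty set. -/
lemma exists_tpath {R T B : Finset X} (hTR : T ⊆ R) (hBR : B ⊆ R) (hT : Even T.card)
    (hB : Even B.card) : ∃ l, TPath R T B l := by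
  obtain ⟨m, hm⟩ := hT
  obtain ⟨n, hn⟩ := hB
  obtain ⟨c, hc⟩ := PairMatching.exists_of_even R T m T hm (by simp +contextual)
  obtain ⟨l, hl, _⟩ := hc.exists_path hTR
  rw [symmDiff_self, Finset.bot_eq_empty] at hl
  obtain ⟨c', hc'⟩ := PairMatching.exists_of_even R ∅ n B hn (by simp)
  have hM : PairMatching R ∅ (∅ ∆ B) c' := by
    rwa [← Finset.bot_eq_empty, bot_symmDiff]
  obtain ⟨l', hl', _⟩ := (hl.backward hTR hM).exists_path (by
    intro x; rw [Finset.mem_symmDiff]; grind)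
  rw [symmDiff_symmDiff_cancel_left] at hl'
  exact ⟨l', hl'⟩

lemma tdist_le {R A B : Finset X} {l : List (X × X)} (h : TPath R A B l) :
    tdist R A B ≤ pathCost l :=
  csInf_le ⟨0, by rintro _ ⟨l, _, rfl⟩; exact pathCost_nonneg l⟩ ⟨l, h, rfl⟩

lemma le_tdist {R A B : Finset X} {K : ℝ} (hne : ∃ l, TPath R A B l)
    (h : ∀ l, TPath R A B l → K ≤ pathCost l) : K ≤ tdist R A B := by
  obtain ⟨l, hl⟩ := hne
  refine le_csInf ⟨_, l, hl, rfl⟩ ?_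
  rintro _ ⟨l, hl, rfl⟩
  exact h l hl

/-- The inequality for two given paths, before passing to infima. -/
lemma exists_pair_of_paths {R T A B : Finset X} (hTR : T ⊆ R) (hAR : A ⊆ R) (hBR : B ⊆ R)
    (hcard : A.card = B.card + 2) {l₁ l₂ : List (X × X)} (h₁ : TPath R T A l₁)
    (h₂ : TPath R T B l₂) :
    ∃ p q : X, p ≠ q ∧ p ∈ A \ B ∧ q ∈ A \ B ∧
      dist p q + tdist R A (insert p (insert q B)) ≤ pathCost l₁ + pathCost l₂ := by
  have h0 : PairMatching R B (B ∆ B) 0 := by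
    rw [symmDiff_self]; exact .nil le_rfl
  have hM := h₁.forward hTR (h₂.backward hTR h0)
  obtain ⟨p, hp, q, hq, hpq, c, hc, hle⟩ := hM.exists_inner (by
    have e1 : (A ∆ B) \ A = B \ A := by
      ext x; simp only [Finset.mem_sdiff, Finset.mem_symmDiff]; tauto
    have e2 : (A ∆ B) ∩ A = A \ B := by
      ext x; simp only [Finset.mem_sdiff, Finset.mem_inter, Finset.mem_symmDiff]; tauto
    rw [e1, e2]
    have := Finset.card_sdiff_add_card_inter A B
    have := Finset.card_sdiff_add_card_inter B A
    rw [Finset.inter_comm] at this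
    omega)
  simp only [Finset.mem_inter, Finset.mem_symmDiff] at hp hq
  obtain ⟨l, hl, hlc⟩ := hc.exists_path (by
    intro x; simp only [Finset.mem_sdiff, Finset.mem_symmDiff]; grind)
  have hE : A ∆ ((A ∆ B) \ {p, q}) = insert p (insert q B) := by
    ext x
    simp only [Finset.mem_symmDiff, Finset.mem_sdiff, Finset.mem_insert, Finset.mem_singleton]
    grind
  rw [hE] at hl
  refine ⟨p, q, hpq, by grind, by grind, ?_⟩
  linarith [tdist_le hl]

/-- **Key inequality for the state conversion algorithm.** Let `T`, `A`, `B` be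
states (even subsets of the finite ground set `R`) such that `A` and `T` are
related by a single transition and `|A| = |B| + 2`. Then there exist distinct
points `p, q ∈ A \ B` such that
`d(p, q) + c(A, B ∪ {p, q}) ≤ c(T, A) + c(T, B)`. -/
theorem single_transition_augmenting_pair (R T A B : Finset X)
    (hTR : T ⊆ R) (hAR : A ⊆ R) (hBR : B ⊆ R)
    (hT : Even T.card) (hA : Even A.card) (hB : Even B.card)
    (hTA : ∃ m : X × X, TPath R T A [m])
    (hcard : A.card = B.card + 2) :
    ∃ p q : X, p ≠ q ∧ p ∈ A \ B ∧ q ∈ A \ B ∧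
      dist p q + tdist R A (insert p (insert q B)) ≤ tdist R T A + tdist R T B := by
  obtain ⟨m, hm⟩ := hTA
  obtain ⟨l₀, hl₀⟩ := exists_tpath hTR hBR hT hB
  -- A pair minimising the left-hand side works for all paths simultaneously.
  let s : Finset (X × X) := (A \ B).offDiag
  have hs : ∀ z : X × X, z ∈ s ↔ z.1 ∈ A \ B ∧ z.2 ∈ A \ B ∧ z.1 ≠ z.2 :=
    fun z => Finset.mem_offDiag
  let f : X × X → ℝ := fun z => dist z.1 z.2 + tdist R A (insert z.1 (insert z.2 B))
  obtain ⟨p₀, q₀, h1, h2, h3, _⟩ := exists_pair_of_paths hTR hAR hBR hcard hm hl₀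
  obtain ⟨z, hz, hmin⟩ := s.exists_min_image f ⟨(p₀, q₀), (hs _).2 ⟨h2, h3, h1⟩⟩
  obtain ⟨hz1, hz2, hz3⟩ := (hs z).1 hz
  refine ⟨z.1, z.2, hz3, hz1, hz2, ?_⟩
  have key : ∀ l₁ l₂, TPath R T A l₁ → TPath R T B l₂ → f z ≤ pathCost l₁ + pathCost l₂ := by
    intro l₁ l₂ hl₁ hl₂
    obtain ⟨p, q, h1, h2, h3, hle⟩ := exists_pair_of_paths hTR hAR hBR hcard hl₁ hl₂
    exact (hmin (p, q) ((hs _).2 ⟨h2, h3, h1⟩)).trans hle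
  have : f z - tdist R T B ≤ tdist R T A := by
    refine le_tdist ⟨_, hm⟩ fun l₁ hl₁ => ?_
    have : f z - pathCost l₁ ≤ tdist R T B :=
      le_tdist ⟨_, hl₀⟩ fun l₂ hl₂ => by linarith [key l₁ l₂ hl₁ hl₂]
    linarith
  change f z ≤ _
  linarith
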